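/- Let K be a field, E a finite-dimensional K-vector space, N ≥ 2 an integer, R a subspace of E^⊗N, and n ≥ N an integer. Let R^⊥ ⊆ (E^*)^⊗N be the annihilator of R under the canonical pairing of (E^*)^⊗N with E^⊗N. Under the canonical isomorphism (E^*)^⊗n ≅ (E^⊗n)^* (dual distributivity for finite-dimensional spaces), the annihilator in (E^⊗n)^* of the subspace ⋂_{r+s=n-N, r,s≥0} E^⊗r ⊗ R ⊗ E^⊗s of E^⊗n corresponds exactly to the subspace Σ_{r+s=n-N, r,s≥0} (E^*)^⊗r ⊗ R^⊥ ⊗ (E^*)^⊗s of (E^*)^⊗n. -/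

import Mathlib

open TensorProduct

section Pairing

variable (K : Type*) [CommSemiring K] (ι : Type*) [Fintype ι]
variable (M : ι → Type*) [∀ i, AddCommMonoid (M i)] [∀ i, Module K (M i)]

/-- The canonical pairing map `⨂ᵢ (Mᵢ)^* →ₗ (⨂ᵢ Mᵢ)^*` sending `⊗ᵢ φᵢ` to the functional
`⊗ᵢ xᵢ ↦ ∏ᵢ φᵢ(xᵢ)`. -/
noncomputable def piTensorDualPairing :
    (⨂[K] i, Module.Dual K (M i)) →ₗ[K] Module.Dual K (⨂[K] i, M i) :=
  (LinearMap.llcomp K (⨂[K] i, M i) (⨂[K] _ : ι, K) K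
      (PiTensorProduct.constantBaseRingEquiv ι K).toLinearMap).comp
    PiTensorProduct.piTensorHomMap

end Pairing

section Sub

variable (K : Type*) [Field K] (V : Type*) [AddCommGroup V] [Module K V]

/-- The subspace `V^⊗i ⊗ U ⊗ V^⊗j` of `V^⊗n` (for `i + N + j = n`): the image of the
canonical map `V^⊗i ⊗ (U ⊗ V^⊗j) → V^⊗i ⊗ (V^⊗N ⊗ V^⊗j) ≅ V^⊗(i+(N+j)) ≅ V^⊗n` induced
by the inclusion of `U ⊆ V^⊗N`. -/
noncomputable def subMiddle {N : ℕ} (U : Submodule K (⨂[K]^N V)) (n i j : ℕ)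
    (h : i + (N + j) = n) : Submodule K (⨂[K]^n V) :=
  LinearMap.range ((TensorPower.cast K V h).toLinearMap
    ∘ₗ (TensorPower.mulEquiv (n := i) (m := N + j)).toLinearMap
    ∘ₗ LinearMap.lTensor (⨂[K]^i V)
        ((TensorPower.mulEquiv (n := N) (m := j)).toLinearMap
          ∘ₗ LinearMap.rTensor (⨂[K]^j V) U.subtype))

end Sub

/-!
For a product `U ⊗ W` of tensor powers, the subspace `U ⊗ ⊤ ⊔ ⊤ ⊗ W` is the kernel of the projection
onto the tensor product of the quotients, so the functionals vanishing on it are the pull-backs of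
products of functionals on the quotients: its annihilator is `U^⊥ ⊗ W^⊥`. Taking `W = ⊥` or `U = ⊥`
moves the annihilator through one tensor factor at a time, first in `U ⊗ V^⊗j` and then in
`V^⊗i ⊗ (U ⊗ V^⊗j)`. In finite dimension annihilators also exchange intersections and sums.
-/

section LinearAlgebra

section Semiring

variable {R M N : Type*} [CommSemiring R] [AddCommMonoid M] [AddCommMonoid N]
variable [Module R M] [Module R N]

theorem dualAnnihilator_map_eq_comap_dualMap (f : M →ₗ[R] N) (U : Submodule R M) :
    (U.map f).dualAnnihilator = U.dualAnnihilator.comap f.dualMap := by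
  ext φ
  simp [Submodule.mem_dualAnnihilator]

variable {M' N' : Type*} [AddCommMonoid M'] [AddCommMonoid N'] [Module R M'] [Module R N']

theorem map_tensorProductMap_map₂_mk (f : M →ₗ[R] M') (g : N →ₗ[R] N')
    (U : Submodule R M) (W : Submodule R N) :
    (Submodule.map₂ (TensorProduct.mk R M N) U W).map (TensorProduct.map f g) =
      Submodule.map₂ (TensorProduct.mk R M' N') (U.map f) (W.map g) := by
  rw [Submodule.map_map₂, Submodule.map₂_map_map]
  rfl

theorem dualMap_map_comp_dualDistrib (f : M →ₗ[R] M') (g : N →ₗ[R] N') :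
    (TensorProduct.map f g).dualMap ∘ₗ TensorProduct.dualDistrib R M' N' =
      TensorProduct.dualDistrib R M N ∘ₗ TensorProduct.map f.dualMap g.dualMap := by
  ext
  rfl

end Semiring

section Ring

variable {R M N : Type*} [CommRing R] [AddCommGroup M] [AddCommGroup N]
variable [Module R M] [Module R N]

theorem ker_map_mkQ_mkQ (U : Submodule R M) (W : Submodule R N) :
    LinearMap.ker (TensorProduct.map U.mkQ W.mkQ) =
      Submodule.map₂ (TensorProduct.mk R M N) U ⊤ ⊔
        Submodule.map₂ (TensorProduct.mk R M N) ⊤ W := by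
  rw [TensorProduct.map_ker (LinearMap.exact_subtype_mkQ U) U.mkQ_surjective
    (LinearMap.exact_subtype_mkQ W) W.mkQ_surjective, sup_comm]
  simp only [LinearMap.lTensor, LinearMap.rTensor, TensorProduct.range_map,
    LinearMap.range_id, Submodule.range_subtype]

theorem map_dualDistrib_map₂_dualAnnihilator (U : Submodule R M) (W : Submodule R N)
    [Module.Finite R (M ⧸ U)] [Module.Free R (M ⧸ U)]
    [Module.Finite R (N ⧸ W)] [Module.Free R (N ⧸ W)] :
    (Submodule.map₂ (TensorProduct.mk R _ _) U.dualAnnihilator W.dualAnnihilator).map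
        (TensorProduct.dualDistrib R M N) =
      (Submodule.map₂ (TensorProduct.mk R M N) U ⊤ ⊔
        Submodule.map₂ (TensorProduct.mk R M N) ⊤ W).dualAnnihilator := by
  have dualDistrib_range : LinearMap.range (TensorProduct.dualDistrib R (M ⧸ U) (N ⧸ W)) = ⊤ :=
    (TensorProduct.dualDistribEquiv R (M ⧸ U) (N ⧸ W)).range
  rw [← ker_map_mkQ_mkQ, ← LinearMap.range_dualMap_eq_dualAnnihilator_ker_of_surjective _
      (TensorProduct.map_surjective U.mkQ_surjective W.mkQ_surjective),
    ← LinearMap.range_comp_of_range_eq_top _ dualDistrib_range, dualMap_map_comp_dualDistrib,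
    LinearMap.range_comp, TensorProduct.range_map, U.range_dualMap_mkQ_eq, W.range_dualMap_mkQ_eq]

end Ring

end LinearAlgebra

section Pairing

theorem piTensorDualPairing_eq_dualDistrib (R ι : Type*) [CommSemiring R] [Fintype ι]
    (M : ι → Type*) [∀ i, AddCommMonoid (M i)] [∀ i, Module R (M i)] :
    piTensorDualPairing R ι M = PiTensorProduct.dualDistrib := by
  ext
  simp [piTensorDualPairing]

theorem piTensorDualPairing_surjective (R ι : Type*) [CommRing R] [Fintype ι]
    (M : ι → Type*) [∀ i, AddCommGroup (M i)] [∀ i, Module R (M i)]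
    [∀ i, Module.Finite R (M i)] [∀ i, Module.Free R (M i)] :
    Function.Surjective (piTensorDualPairing R ι M) := by
  rw [piTensorDualPairing_eq_dualDistrib]
  exact PiTensorProduct.dualDistribEquiv.surjective

end Pairing

section TensorPower

/-- The canonical pairing `(M^*)^⊗n → (M^⊗n)^*`, that is, `piTensorDualPairing` for a constant
family. -/
noncomputable abbrev tensorPowerDualPairing (R M : Type*) [CommSemiring R] [AddCommMonoid M]
    [Module R M] (n : ℕ) :
    (⨂[R]^n (Module.Dual R M)) →ₗ[R] Module.Dual R (⨂[R]^n M) :=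
  piTensorDualPairing R (Fin n) fun _ => M

section Semiring

variable {R M : Type*} [CommSemiring R] [AddCommMonoid M] [Module R M] {m n : ℕ}

/-- The submodule `U ⊗ W` of `M^⊗(m+n)`, for `U ⊆ M^⊗m` and `W ⊆ M^⊗n`. -/
noncomputable def tensorPowerProd (U : Submodule R (⨂[R]^m M))
    (W : Submodule R (⨂[R]^n M)) : Submodule R (⨂[R]^(m + n) M) :=
  (Submodule.map₂ (TensorProduct.mk R _ _) U W).map TensorPower.mulEquiv.toLinearMap

theorem tensorPowerProd_bot (U : Submodule R (⨂[R]^m M)) :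
    tensorPowerProd U (⊥ : Submodule R (⨂[R]^n M)) = ⊥ := by
  rw [tensorPowerProd, Submodule.map₂_bot_right, Submodule.map_bot]

theorem bot_tensorPowerProd (W : Submodule R (⨂[R]^n M)) :
    tensorPowerProd (⊥ : Submodule R (⨂[R]^m M)) W = ⊥ := by
  rw [tensorPowerProd, Submodule.map₂_bot_left, Submodule.map_bot]

theorem mulEquiv_tprod_tmul_tprod (x : Fin m → M) (y : Fin n → M) :
    TensorPower.mulEquiv (PiTensorProduct.tprod R x ⊗ₜ[R] PiTensorProduct.tprod R y) =
      PiTensorProduct.tprod R (Fin.append x y) :=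
  TensorPower.tprod_mul_tprod R x y

theorem dualMap_mulEquiv_comp_tensorPowerDualPairing :
    (TensorPower.mulEquiv.toLinearMap.dualMap ∘ₗ tensorPowerDualPairing R M (m + n)) ∘ₗ
        TensorPower.mulEquiv.toLinearMap =
      TensorProduct.dualDistrib R (⨂[R]^m M) (⨂[R]^n M) ∘ₗ
        TensorProduct.map (tensorPowerDualPairing R M m) (tensorPowerDualPairing R M n) := by
  ext f g x y
  simp [mulEquiv_tprod_tmul_tprod, piTensorDualPairing_eq_dualDistrib, Fin.prod_univ_add]

theorem map_tensorPowerDualPairing_cast (h : m = n)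
    {A : Submodule R (⨂[R]^m (Module.Dual R M))} {U : Submodule R (⨂[R]^m M)}
    (hA : A.map (tensorPowerDualPairing R M m) = U.dualAnnihilator) :
    (A.map (TensorPower.cast R (Module.Dual R M) h).toLinearMap).map
        (tensorPowerDualPairing R M n) =
      (U.map (TensorPower.cast R M h).toLinearMap).dualAnnihilator := by
  subst h
  simpa using hA

end Semiring

section Ring

variable {R M : Type*} [CommRing R] [AddCommGroup M] [Module R M] {m n : ℕ}

theorem map_tensorPowerDualPairing_tensorPowerProd
    {A : Submodule R (⨂[R]^m (Module.Dual R M))} {B : Submodule R (⨂[R]^n (Module.Dual R M))}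
    {U : Submodule R (⨂[R]^m M)} {W : Submodule R (⨂[R]^n M)}
    [Module.Finite R ((⨂[R]^m M) ⧸ U)] [Module.Free R ((⨂[R]^m M) ⧸ U)]
    [Module.Finite R ((⨂[R]^n M) ⧸ W)] [Module.Free R ((⨂[R]^n M) ⧸ W)]
    (hA : A.map (tensorPowerDualPairing R M m) = U.dualAnnihilator)
    (hB : B.map (tensorPowerDualPairing R M n) = W.dualAnnihilator) :
    (tensorPowerProd A B).map (tensorPowerDualPairing R M (m + n)) =
      (tensorPowerProd U ⊤ ⊔ tensorPowerProd ⊤ W).dualAnnihilator := by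
  let Φ : (⨂[R]^m M) ⊗[R] (⨂[R]^n M) ≃ₗ[R] ⨂[R]^(m + n) M := TensorPower.mulEquiv
  have dualMap_bijective : Function.Bijective Φ.toLinearMap.dualMap := Φ.dualMap.bijective
  apply Submodule.map_injective_of_injective dualMap_bijective.injective
  calc ((tensorPowerProd A B).map (tensorPowerDualPairing R M (m + n))).map Φ.toLinearMap.dualMap
    _ = (Submodule.map₂ (TensorProduct.mk R _ _) A B).map
          ((Φ.toLinearMap.dualMap ∘ₗ tensorPowerDualPairing R M (m + n)) ∘ₗ
            TensorPower.mulEquiv.toLinearMap) := by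
      simp only [tensorPowerProd, Submodule.map_comp]
    _ = (Submodule.map₂ (TensorProduct.mk R _ _) (A.map (tensorPowerDualPairing R M m))
          (B.map (tensorPowerDualPairing R M n))).map (TensorProduct.dualDistrib R _ _) := by
      rw [dualMap_mulEquiv_comp_tensorPowerDualPairing, Submodule.map_comp,
        map_tensorProductMap_map₂_mk]
    _ = (Submodule.map₂ (TensorProduct.mk R _ _) U ⊤ ⊔
          Submodule.map₂ (TensorProduct.mk R _ _) ⊤ W).dualAnnihilator := by
      rw [hA, hB, map_dualDistrib_map₂_dualAnnihilator]
    _ = (tensorPowerProd U ⊤ ⊔ tensorPowerProd ⊤ W).dualAnnihilator.map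
          Φ.toLinearMap.dualMap := by
      rw [tensorPowerProd, tensorPowerProd, ← Submodule.map_sup,
        dualAnnihilator_map_eq_comap_dualMap,
        Submodule.map_comap_eq_of_surjective dualMap_bijective.surjective]

theorem map_tensorPowerDualPairing_top [Module.Finite R M] [Module.Free R M] (n : ℕ) :
    (⊤ : Submodule R (⨂[R]^n (Module.Dual R M))).map (tensorPowerDualPairing R M n) =
      (⊥ : Submodule R (⨂[R]^n M)).dualAnnihilator := by
  rw [Submodule.map_top, Submodule.dualAnnihilator_bot, LinearMap.range_eq_top]
  exact piTensorDualPairing_surjective R (Fin n) fun _ => M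

end Ring

section Field

variable {K : Type*} [Field K] {V : Type*} [AddCommGroup V] [Module K V]

theorem subMiddle_eq_map_cast_tensorPowerProd {N : ℕ} (U : Submodule K (⨂[K]^N V)) (n i j : ℕ)
    (h : i + (N + j) = n) :
    subMiddle K V U n i j h =
      (tensorPowerProd (⊤ : Submodule K (⨂[K]^i V))
        (tensorPowerProd U (⊤ : Submodule K (⨂[K]^j V)))).map
          (TensorPower.cast K V h).toLinearMap := by
  simp only [subMiddle, tensorPowerProd, LinearMap.range_comp, LinearMap.lTensor,
    LinearMap.rTensor, TensorProduct.range_map, LinearMap.range_id, Submodule.range_subtype]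

variable [FiniteDimensional K V]

theorem map_tensorPowerDualPairing_tensorPowerProd_top {m : ℕ}
    {A : Submodule K (⨂[K]^m (Module.Dual K V))} {U : Submodule K (⨂[K]^m V)}
    (hA : A.map (tensorPowerDualPairing K V m) = U.dualAnnihilator) (n : ℕ) :
    (tensorPowerProd A (⊤ : Submodule K (⨂[K]^n (Module.Dual K V)))).map
        (tensorPowerDualPairing K V (m + n)) =
      (tensorPowerProd U (⊤ : Submodule K (⨂[K]^n V))).dualAnnihilator := by
  rw [map_tensorPowerDualPairing_tensorPowerProd hA (map_tensorPowerDualPairing_top n),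
    tensorPowerProd_bot, sup_bot_eq]

theorem map_tensorPowerDualPairing_top_tensorPowerProd {n : ℕ}
    {B : Submodule K (⨂[K]^n (Module.Dual K V))} {W : Submodule K (⨂[K]^n V)} (m : ℕ)
    (hB : B.map (tensorPowerDualPairing K V n) = W.dualAnnihilator) :
    (tensorPowerProd (⊤ : Submodule K (⨂[K]^m (Module.Dual K V))) B).map
        (tensorPowerDualPairing K V (m + n)) =
      (tensorPowerProd (⊤ : Submodule K (⨂[K]^m V)) W).dualAnnihilator := by
  rw [map_tensorPowerDualPairing_tensorPowerProd (map_tensorPowerDualPairing_top m) hB,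
    bot_tensorPowerProd, bot_sup_eq]

theorem map_tensorPowerDualPairing_subMiddle {N : ℕ}
    {A : Submodule K (⨂[K]^N (Module.Dual K V))} {U : Submodule K (⨂[K]^N V)}
    (hA : A.map (tensorPowerDualPairing K V N) = U.dualAnnihilator)
    (n i j : ℕ) (h : i + (N + j) = n) :
    (subMiddle K (Module.Dual K V) A n i j h).map (tensorPowerDualPairing K V n) =
      (subMiddle K V U n i j h).dualAnnihilator := by
  simp only [subMiddle_eq_map_cast_tensorPowerProd]
  exact map_tensorPowerDualPairing_cast h <| map_tensorPowerDualPairing_top_tensorPowerProd i <|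
    map_tensorPowerDualPairing_tensorPowerProd_top hA j

end Field

end TensorPower

/-- Let `K` be a field, `E` a finite-dimensional `K`-vector space,
`N ≥ 2`, `R ⊆ E^⊗N` a subspace and `n ≥ N`.  Let `R^⊥ ⊆ (E^*)^⊗N` be the annihilator of
`R` under the canonical pairing.  Under the canonical map `(E^*)^⊗n → (E^⊗n)^*`, the
subspace `Σ_{r+s=n-N} (E^*)^⊗r ⊗ R^⊥ ⊗ (E^*)^⊗s` of `(E^*)^⊗n` corresponds exactly to the
annihilator in `(E^⊗n)^*` of the subspace `⋂_{r+s=n-N} E^⊗r ⊗ R ⊗ E^⊗s` of `E^⊗n`. -/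
theorem statement14 (K : Type*) [Field K] (E : Type*) [AddCommGroup E] [Module K E]
    [FiniteDimensional K E] (N : ℕ) (hN : 2 ≤ N)
    (R : Submodule K (⨂[K]^N E)) (n : ℕ) (hn : N ≤ n) :
    Submodule.map (piTensorDualPairing K (Fin n) (fun _ => E))
      (⨆ i : Fin (n - N + 1),
        subMiddle K (Module.Dual K E)
          (Submodule.comap (piTensorDualPairing K (Fin N) (fun _ => E))
            R.dualAnnihilator)
          n i (n - N - i) (by omega)) =
    Submodule.dualAnnihilator
      (⨅ i : Fin (n - N + 1), subMiddle K E R n i (n - N - i) (by omega)) := by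
  have map_comap_dualAnnihilator :
      (R.dualAnnihilator.comap (tensorPowerDualPairing K E N)).map (tensorPowerDualPairing K E N) =
        R.dualAnnihilator :=
    Submodule.map_comap_eq_of_surjective (piTensorDualPairing_surjective K (Fin N) fun _ => E) _
  rw [Submodule.map_iSup, Subspace.dualAnnihilator_iInf_eq]
  exact iSup_congr fun i =>
    map_tensorPowerDualPairing_subMiddle map_comap_dualAnnihilator n i (n - N - i) (by omega)
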